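/- Let p = (f₁ ≤ … ≤ f_N) and q = (g₁ ≤ … ≤ g_M) be vertex patterns with N, M ≥ 3, entries ≥ 3, and positive combinatorial curvature (1 − N/2 + Σᵢ 1/fᵢ > 0 and 1 − M/2 + Σⱼ 1/gⱼ > 0). If p ≤_emb q then a_c(p) ≥ a_c(q). If moreover p <_emb q and K_{a_c(p)}(p) = 0, then a_c(p) > a_c(q). -/

import Mathlib

/-- The angle defect `K_a(p) = 2π − Σᵢ 2·arcsin(cos(π/fᵢ)/cos(a/2))` of a vertex
pattern given by `f : Fin N → ℕ`. -/
noncomputable def Kf {N : ℕ} (f : Fin N → ℕ) (a : ℝ) : ℝ :=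
  2 * Real.pi - ∑ i, 2 * Real.arcsin (Real.cos (Real.pi / (f i : ℝ)) / Real.cos (a / 2))

/-- The critical side-length `a_c(p) = max{a ∈ [0, 2π/f_N] : K_a(p) ≥ 0}` of a
vertex pattern `f : Fin (N+1) → ℕ` (with last entry `f (Fin.last N)`). -/
noncomputable def ac {N : ℕ} (f : Fin (N + 1) → ℕ) : ℝ :=
  sSup {a : ℝ | a ∈ Set.Icc 0 (2 * Real.pi / (f (Fin.last N) : ℝ)) ∧ 0 ≤ Kf f a}

lemma aux_cos {n m : ℕ} (hn : 3 ≤ n) (h : n ≤ m) :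
    Real.cos (Real.pi / (n : ℝ)) ≤ Real.cos (Real.pi / (m : ℝ)) := by
  have hn' : (3 : ℝ) ≤ n := by exact_mod_cast hn
  have h' : (n : ℝ) ≤ m := by exact_mod_cast h
  have hpi := Real.pi_pos
  apply Real.cos_le_cos_of_nonneg_of_le_pi
  · positivity
  · rw [div_le_iff₀ (by linarith)]; nlinarith
  · gcongr

lemma aux_cos_lt {n m : ℕ} (hn : 3 ≤ n) (h : n < m) :
    Real.cos (Real.pi / (n : ℝ)) < Real.cos (Real.pi / (m : ℝ)) := by
  have hn' : (3 : ℝ) ≤ n := by exact_mod_cast hn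
  have h' : (n : ℝ) < m := by exact_mod_cast h
  have hpi := Real.pi_pos
  apply Real.cos_lt_cos_of_nonneg_of_le_pi
  · positivity
  · rw [div_le_iff₀ (by linarith)]; nlinarith
  · gcongr

lemma aux_cos_pos {n : ℕ} (hn : 3 ≤ n) : 0 < Real.cos (Real.pi / (n : ℝ)) := by
  have h := aux_cos (le_refl 3) hn
  have h3 : Real.cos (Real.pi / ((3 : ℕ) : ℝ)) = 1 / 2 := by
    push_cast; exact Real.cos_pi_div_three
  rw [h3] at h; linarith

/-- On the admissible range, `cos (a/2)` dominates `cos (π/m)`. -/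
lemma aux_cos_half {m : ℕ} (hm : 3 ≤ m) {a : ℝ} (ha : a ∈ Set.Icc 0 (2 * Real.pi / (m : ℝ))) :
    Real.cos (Real.pi / (m : ℝ)) ≤ Real.cos (a / 2) := by
  have hm' : (3 : ℝ) ≤ m := by exact_mod_cast hm
  have hpi := Real.pi_pos
  have h2 : 2 * Real.pi / (m : ℝ) = 2 * (Real.pi / m) := by ring
  rw [h2] at ha
  apply Real.cos_le_cos_of_nonneg_of_le_pi
  · linarith [ha.1]
  · rw [div_le_iff₀ (by linarith)]; nlinarith
  · linarith [ha.2]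

lemma aux_zero_mem {N : ℕ} (f : Fin (N + 1) → ℕ) (hf3 : ∀ i, 3 ≤ f i)
    (hfcurv : 0 < 1 - ((N : ℝ) + 1) / 2 + ∑ i, (1 : ℝ) / (f i : ℝ)) :
    (0 : ℝ) ∈ {a : ℝ | a ∈ Set.Icc 0 (2 * Real.pi / (f (Fin.last N) : ℝ)) ∧ 0 ≤ Kf f a} := by
  have hpi := Real.pi_pos
  refine ⟨⟨le_refl _, by positivity⟩, ?_⟩
  have key : ∀ i, 2 * Real.arcsin (Real.cos (Real.pi / (f i : ℝ)) / Real.cos ((0 : ℝ) / 2))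
      = Real.pi - 2 * Real.pi * (1 / (f i : ℝ)) := by
    intro i
    have hn' : (3 : ℝ) ≤ f i := by exact_mod_cast hf3 i
    have h1 : Real.pi / (f i : ℝ) ≤ Real.pi := by
      rw [div_le_iff₀ (by linarith)]; nlinarith
    have h0 : 0 ≤ Real.pi / (f i : ℝ) := by positivity
    rw [zero_div, Real.cos_zero, div_one, Real.arcsin_eq_pi_div_two_sub_arccos,
      Real.arccos_cos h0 h1]
    ring
  have : Kf f 0 = 2 * Real.pi * (1 - ((N : ℝ) + 1) / 2 + ∑ i, (1 : ℝ) / (f i : ℝ)) := by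
    unfold Kf
    rw [Finset.sum_congr rfl (fun i _ => key i), Finset.sum_sub_distrib, ← Finset.mul_sum]
    simp
    ring
  rw [this]
  positivity

lemma aux_bdd {N : ℕ} (f : Fin (N + 1) → ℕ) :
    BddAbove {a : ℝ | a ∈ Set.Icc 0 (2 * Real.pi / (f (Fin.last N) : ℝ)) ∧ 0 ≤ Kf f a} :=
  ⟨_, fun _ ha => ha.1.2⟩

lemma aux_closed {N : ℕ} (f : Fin (N + 1) → ℕ) (hf3 : ∀ i, 3 ≤ f i) :
    IsClosed {a : ℝ | a ∈ Set.Icc 0 (2 * Real.pi / (f (Fin.last N) : ℝ)) ∧ 0 ≤ Kf f a} := by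
  have hc : ContinuousOn (Kf f) (Set.Icc 0 (2 * Real.pi / (f (Fin.last N) : ℝ))) := by
    unfold Kf
    refine continuousOn_const.sub (continuousOn_finsetSum _ fun i _ => ?_)
    refine continuousOn_const.mul (Real.continuous_arcsin.comp_continuousOn ?_)
    refine continuousOn_const.div (by fun_prop) fun a ha => ?_
    exact ((aux_cos_pos (hf3 _)).trans_le (aux_cos_half (hf3 _) ha)).ne'
  exact hc.preimage_isClosed_of_isClosed isClosed_Icc isClosed_Ici

lemma aux_K {N M : ℕ} (f : Fin (N + 1) → ℕ) (g : Fin (M + 1) → ℕ)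
    (hgmono : Monotone g)
    (hf3 : ∀ i, 3 ≤ f i) (hg3 : ∀ i, 3 ≤ g i)
    (j : Fin (N + 1) → Fin (M + 1)) (hj : StrictMono j)
    (hemb : ∀ i, f i ≤ g (j i)) {a : ℝ}
    (ha : a ∈ Set.Icc 0 (2 * Real.pi / (g (Fin.last M) : ℝ))) :
    Kf g a ≤ Kf f a ∧ ((N < M ∨ ∃ i, f i < g (j i)) → Kf g a < Kf f a) := by
  have hle := aux_cos_half (hg3 _) ha
  have hc : 0 < Real.cos (a / 2) := (aux_cos_pos (hg3 _)).trans_le hle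
  set F : ℕ → ℝ := fun n => 2 * Real.arcsin (Real.cos (Real.pi / (n : ℝ)) / Real.cos (a / 2))
    with hF
  have hFpos : ∀ n, 3 ≤ n → 0 < F n := fun n hn => by
    have := Real.arcsin_pos.2 (div_pos (aux_cos_pos hn) hc)
    simp only [hF]; linarith
  have h1 : ∀ i, F (f i) ≤ F (g (j i)) := fun i => by
    have := Real.monotone_arcsin (div_le_div_of_nonneg_right (aux_cos (hf3 i) (hemb i)) hc.le)
    simp only [hF]; linarith
  have h1' : ∀ i, f i < g (j i) → F (f i) < F (g (j i)) := fun i hi => by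
    have hd := div_lt_div_of_pos_right (aux_cos_lt (hf3 i) hi) hc
    have h0 := div_pos (aux_cos_pos (hf3 i)) hc
    have hup : Real.cos (Real.pi / (g (j i) : ℝ)) / Real.cos (a / 2) ≤ 1 :=
      (div_le_one hc).2 ((aux_cos (hg3 _) (hgmono (Fin.le_last _))).trans hle)
    have := Real.arcsin_lt_arcsin (by linarith) hd hup
    simp only [hF]; linarith
  have himg : ∑ i, F (g (j i)) = ∑ k ∈ Finset.univ.image j, F (g k) :=
    (Finset.sum_image (f := fun k => F (g k)) (fun x _ y _ h => hj.injective h)).symm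
  have hs1 : ∑ i, F (f i) ≤ ∑ i, F (g (j i)) := Finset.sum_le_sum fun i _ => h1 i
  have hs2 : ∑ i, F (g (j i)) ≤ ∑ k, F (g k) := by
    rw [himg]
    exact Finset.sum_le_sum_of_subset_of_nonneg (Finset.subset_univ _)
      fun k _ _ => (hFpos _ (hg3 k)).le
  have eg : Kf g a = 2 * Real.pi - ∑ k, F (g k) := rfl
  have ef : Kf f a = 2 * Real.pi - ∑ k, F (f k) := rfl
  rw [eg, ef]
  refine ⟨by linarith, ?_⟩
  rintro (hNM | ⟨i, hi⟩)
  · obtain ⟨k, hk⟩ : ∃ k, k ∉ Finset.univ.image j := by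
      by_contra! hcon
      have hcard := Finset.card_image_le (s := Finset.univ) (f := j)
      rw [Finset.eq_univ_iff_forall.2 hcon] at hcard
      simp at hcard
      omega
    have : ∑ i, F (g (j i)) < ∑ k, F (g k) := by
      rw [himg]
      exact Finset.sum_lt_sum_of_subset (Finset.subset_univ _) (Finset.mem_univ k) hk
        (hFpos _ (hg3 k)) fun k _ _ => (hFpos _ (hg3 k)).le
    linarith
  · have : ∑ i, F (f i) < ∑ i, F (g (j i)) :=
      Finset.sum_lt_sum (fun i _ => h1 i) ⟨i, Finset.mem_univ i, h1' i hi⟩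
    linarith

/-- Let `p` and `q` be vertex patterns (lengths `≥ 3`, entries `≥ 3`, positive
combinatorial curvature).  If `p ≤_emb q` then `a_c(p) ≥ a_c(q)`.  If moreover
`p <_emb q` and `K_{a_c(p)}(p) = 0`, then `a_c(p) > a_c(q)`. -/
theorem stmt4 (N M : ℕ) (hN : 2 ≤ N) (hM : 2 ≤ M)
    (f : Fin (N + 1) → ℕ) (g : Fin (M + 1) → ℕ)
    (hfmono : Monotone f) (hgmono : Monotone g)
    (hf3 : ∀ i, 3 ≤ f i) (hg3 : ∀ i, 3 ≤ g i)
    (hfcurv : 0 < 1 - ((N : ℝ) + 1) / 2 + ∑ i, (1 : ℝ) / (f i : ℝ))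
    (hgcurv : 0 < 1 - ((M : ℝ) + 1) / 2 + ∑ i, (1 : ℝ) / (g i : ℝ))
    (j : Fin (N + 1) → Fin (M + 1)) (hj : StrictMono j)
    (hemb : ∀ i, f i ≤ g (j i)) :
    ac g ≤ ac f ∧
      ((N < M ∨ ∃ i, f i < g (j i)) → Kf f (ac f) = 0 → ac g < ac f) := by
  have hsub : {a : ℝ | a ∈ Set.Icc 0 (2 * Real.pi / (g (Fin.last M) : ℝ)) ∧ 0 ≤ Kf g a} ⊆
      {a : ℝ | a ∈ Set.Icc 0 (2 * Real.pi / (f (Fin.last N) : ℝ)) ∧ 0 ≤ Kf f a} := by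
    rintro a ⟨ha, hK⟩
    refine ⟨⟨ha.1, ha.2.trans ?_⟩, hK.trans (aux_K f g hgmono hf3 hg3 j hj hemb ha).1⟩
    have h3 : (0 : ℝ) < f (Fin.last N) := by
      have := hf3 (Fin.last N)
      exact_mod_cast (by omega : 0 < f (Fin.last N))
    have hfg : (f (Fin.last N) : ℝ) ≤ g (Fin.last M) := by
      exact_mod_cast (hemb _).trans (hgmono (Fin.le_last _))
    have hpi := Real.pi_pos
    gcongr
  have hle : ac g ≤ ac f := csSup_le_csSup (aux_bdd f) ⟨0, aux_zero_mem g hg3 hgcurv⟩ hsub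
  refine ⟨hle, fun hstrict hK0 => lt_of_le_of_ne hle fun heq => ?_⟩
  have hmem : ac g ∈ {a : ℝ | a ∈ Set.Icc 0 (2 * Real.pi / (g (Fin.last M) : ℝ)) ∧ 0 ≤ Kf g a} :=
    (aux_closed g hg3).csSup_mem ⟨0, aux_zero_mem g hg3 hgcurv⟩ (aux_bdd g)
  have h1 := (aux_K f g hgmono hf3 hg3 j hj hemb hmem.1).2 hstrict
  have h2 := hmem.2
  rw [← heq] at hK0
  linarith
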